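/- Knight's identity for the check function: for every τ ∈ (0,1) and all u, v ∈ ℝ, ρ_τ(u − v) − ρ_τ(u) = −v·ψ_τ(u) + ∫₀^v (1{u ≤ s} − 1{u < 0}) ds, where ∫₀^v denotes the signed Lebesgue integral (equal to −∫_v^0 when v < 0). -/

import Mathlib

/-!
Up to the linear term `τ x`, the check function is the negative part `x⁻`, and the step function
`1{u ≤ s}` is at every `s` the right derivative of `(s - u)⁺`. Hence its integral from `0` to `v`
is `(v - u)⁺ - (-u)⁺ = (u - v)⁻ - u⁻`, the nonlinear part of the increment of `ρ_τ`, while the two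
contributions of `1{u < 0}` to the right-hand side cancel.
-/

/-- The check function `ρ_τ(x) = x (τ - 1{x<0})`. -/
noncomputable def rho (τ x : ℝ) : ℝ := x * (τ - if x < 0 then 1 else 0)

/-- `ψ_τ(u) = τ - 1{u<0}`. -/
noncomputable def psi (τ u : ℝ) : ℝ := τ - if u < 0 then 1 else 0

theorem rho_eq_mul_add_negPart (τ x : ℝ) : rho τ x = τ * x + x⁻ := by
  unfold rho
  split_ifs with hx
  · rw [negPart_of_nonpos hx.le]
    ring
  · rw [negPart_of_nonneg (not_lt.mp hx)]
    ring

theorem monotone_ite_le {α β : Type*} [Preorder α] [DecidableLE α] [Preorder β] [Zero β] [One β]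
    [ZeroLEOneClass β] (u : α) : Monotone fun s => if u ≤ s then (1 : β) else 0 := by
  intro s t hst
  by_cases hus : u ≤ s
  · simp [hus, hus.trans hst]
  · by_cases hut : u ≤ t <;> simp [hus, hut]

theorem hasDerivWithinAt_posPart_sub_Ioi (u s : ℝ) :
    HasDerivWithinAt (fun t : ℝ => (t - u)⁺) (if u ≤ s then 1 else 0) (Set.Ioi s) s := by
  split_ifs with hus
  · have h_eq (t : ℝ) (ht : s ≤ t) : (t - u)⁺ = t - u :=
      posPart_of_nonneg (sub_nonneg.mpr (hus.trans ht))
    exact ((hasDerivAt_id s).sub_const u).hasDerivWithinAt.congr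
      (fun t ht => h_eq t ht.le) (h_eq s le_rfl)
  · have h_eq : (fun t : ℝ => (t - u)⁺) =ᶠ[nhds s] fun _ => 0 := by
      filter_upwards [Iio_mem_nhds (not_le.mp hus)] with t ht
      exact posPart_of_nonpos (sub_nonpos.mpr ht.le)
    exact ((hasDerivAt_const s 0).congr_of_eventuallyEq h_eq).hasDerivWithinAt

theorem integral_ite_le (u a b : ℝ) :
    ∫ s in a..b, (if u ≤ s then (1 : ℝ) else 0) = (b - u)⁺ - (a - u)⁺ :=
  intervalIntegral.integral_eq_sub_of_hasDeriv_right
    (continuous_posPart.comp (continuous_sub_right u)).continuousOn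
    (fun s _ => hasDerivWithinAt_posPart_sub_Ioi u s)
    (monotone_ite_le u).intervalIntegrable

theorem knight_identity_general (τ u v : ℝ) :
    rho τ (u - v) - rho τ u =
      -v * psi τ u +
        ∫ s in (0:ℝ)..v, ((if u ≤ s then (1:ℝ) else 0) - (if u < 0 then (1:ℝ) else 0)) := by
  have h_step : ∫ s in (0:ℝ)..v, (if u ≤ s then (1:ℝ) else 0) = (u - v)⁻ - u⁻ := by
    rw [integral_ite_le, zero_sub, posPart_neg, ← neg_sub u v, posPart_neg]
  rw [intervalIntegral.integral_sub (monotone_ite_le u).intervalIntegrable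
    intervalIntegrable_const, h_step, intervalIntegral.integral_const, smul_eq_mul,
    rho_eq_mul_add_negPart, rho_eq_mul_add_negPart, psi]
  ring

/-- Knight's identity for the check function. -/
theorem knight_identity (τ : ℝ) (hτ0 : 0 < τ) (hτ1 : τ < 1) (u v : ℝ) :
    rho τ (u - v) - rho τ u =
      -v * psi τ u +
        ∫ s in (0:ℝ)..v, ((if u ≤ s then (1:ℝ) else 0) - (if u < 0 then (1:ℝ) else 0)) :=
  knight_identity_general τ u v
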